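/- Let m ≥ 3 be odd, σ₀ ∈ {−1, +1}, and L, T, τ > 0. Let q₀, q₁, …, q_{m−1} : [0,T] × ℝ → ℝ be C¹ functions, L-periodic in x, satisfying ∂_t q₀ + σ₀ ∂_x q_{m−1} = 0 and, for every j ∈ {1, …, m−1}, τ ∂_t q_j + σ₀ (−1)^j ∂_x q_{m−j−1} = σ₀ (−1)^j q_{m−j}. Then the energy t ↦ η(q)(t) = ∫₀^L ( ½ q₀(t,x)² + (τ/2) Σ_{j=1}^{m−1} q_j(t,x)² ) dx is constant on [0,T]. -/

import Mathlib

open MeasureTheory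

/-- Partial derivative with respect to the first (time) variable. -/
noncomputable def pdt (u : ℝ → ℝ → ℝ) : ℝ → ℝ → ℝ :=
  fun t x => deriv (fun s => u s x) t

/-- Partial derivative with respect to the second (space) variable. -/
noncomputable def pdx (u : ℝ → ℝ → ℝ) : ℝ → ℝ → ℝ :=
  fun t x => deriv (fun y => u t y) x

/-- The time slice of a `C¹` function has derivative `pdt`. -/
lemma hasDerivAt_pdt {u : ℝ → ℝ → ℝ} (hu : ContDiff ℝ 1 (Function.uncurry u)) (t x : ℝ) :
    HasDerivAt (fun s => u s x) (pdt u t x) t := by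
  have h : ContDiff ℝ 1 (fun s => u s x) := hu.comp (contDiff_id.prodMk contDiff_const)
  exact (h.differentiable one_ne_zero t).hasDerivAt

/-- The space slice of a `C¹` function has derivative `pdx`. -/
lemma hasDerivAt_pdx {u : ℝ → ℝ → ℝ} (hu : ContDiff ℝ 1 (Function.uncurry u)) (t x : ℝ) :
    HasDerivAt (fun y => u t y) (pdx u t x) x := by
  have h : ContDiff ℝ 1 (fun y => u t y) := hu.comp (contDiff_const.prodMk contDiff_id)
  exact (h.differentiable one_ne_zero x).hasDerivAt

lemma continuous_pdt {u : ℝ → ℝ → ℝ} (hu : ContDiff ℝ 1 (Function.uncurry u)) :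
    Continuous (Function.uncurry (pdt u)) := by
  have h : Function.uncurry (pdt u) =
      fun p : ℝ × ℝ => fderiv ℝ (Function.uncurry u) p (1, 0) := by
    ext ⟨t, x⟩
    have hf := (hu.differentiable one_ne_zero (t, x)).hasFDerivAt
    exact (hf.comp_hasDerivAt t ((hasDerivAt_id t).prodMk (hasDerivAt_const t x))).deriv
  rw [h]
  exact (hu.continuous_fderiv one_ne_zero).clm_apply continuous_const

lemma continuous_pdx {u : ℝ → ℝ → ℝ} (hu : ContDiff ℝ 1 (Function.uncurry u)) (t : ℝ) :
    Continuous (pdx u t) := by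
  have h : ContDiff ℝ 1 (fun y => u t y) := hu.comp (contDiff_const.prodMk contDiff_id)
  exact h.continuous_deriv le_rfl

/-- If the time derivative of a density has zero mean at all times in `[0, t]`, then the integral of
the density takes the same value at `0` and at `t`. -/
lemma integral_eq_of_integral_deriv_eq_zero {e e' : ℝ → ℝ → ℝ} {L t : ℝ}
    (hL : 0 ≤ L) (ht : 0 ≤ t) (he : ∀ s, Continuous (e s))
    (hderiv : ∀ s x, HasDerivAt (fun r => e r x) (e' s x) s)
    (he' : Continuous (Function.uncurry e'))
    (hzero : ∀ s ∈ Set.Icc 0 t, ∫ x in (0 : ℝ)..L, e' s x = 0) :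
    ∫ x in (0 : ℝ)..L, e t x = ∫ x in (0 : ℝ)..L, e 0 x := by
  have hftc (x : ℝ) : ∫ s in (0 : ℝ)..t, e' s x = e t x - e 0 x := by
    have hc : Continuous (fun s => e' s x) := he'.comp (by fun_prop : Continuous fun s => (s, x))
    exact intervalIntegral.integral_eq_sub_of_hasDerivAt (fun s _ => hderiv s x)
      (hc.intervalIntegrable 0 t)
  have hint : Integrable (Function.uncurry e')
      ((volume.restrict (Set.Ioc 0 t)).prod (volume.restrict (Set.Ioc 0 L))) := by
    rw [Measure.prod_restrict]
    exact (he'.continuousOn.integrableOn_compact (isCompact_Icc.prod isCompact_Icc)).mono_set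
      (Set.prod_mono Set.Ioc_subset_Icc_self Set.Ioc_subset_Icc_self)
  have hswap := integral_integral_swap hint
  simp only [← intervalIntegral.integral_of_le hL, ← intervalIntegral.integral_of_le ht, hftc]
    at hswap
  rw [intervalIntegral.integral_sub ((he t).intervalIntegrable 0 L)
    ((he 0).intervalIntegrable 0 L)] at hswap
  rw [← sub_eq_zero, ← hswap]
  refine intervalIntegral.integral_zero_ae (.of_forall fun s hs => hzero s ?_)
  rw [Set.uIoc_of_le ht] at hs
  exact Set.Ioc_subset_Icc_self hs

/-- For odd `m`, the alternating sum of `a j * a (m - j)` vanishes by the reflection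
`j ↦ m - j`. -/
lemma sum_alternating_mul_reflect_eq_zero {m : ℕ} (hm : Odd m) (a : ℕ → ℝ) :
    ∑ j ∈ Finset.Icc 1 (m - 1), (-1 : ℝ) ^ j * (a j * a (m - j)) = 0 := by
  have h : ∑ j ∈ Finset.Icc 1 (m - 1), (-1 : ℝ) ^ j * (a j * a (m - j)) =
      ∑ j ∈ Finset.Icc 1 (m - 1), -((-1 : ℝ) ^ j * (a j * a (m - j))) := by
    refine Finset.sum_nbij' (fun j => m - j) (fun j => m - j) ?_ ?_ ?_ ?_ ?_ <;>
      intro j hj <;> rw [Finset.mem_Icc] at hj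
    · rw [Finset.mem_Icc]; omega
    · rw [Finset.mem_Icc]; omega
    · omega
    · omega
    · have hsign : (-1 : ℝ) ^ (m - j) * (-1) ^ j = -1 := by
        rw [← pow_add, Nat.sub_add_cancel (by omega), hm.neg_one_pow]
      have hsq : (-1 : ℝ) ^ j * (-1) ^ j = 1 := by rw [← mul_pow]; simp
      rw [Nat.sub_sub_self (by omega)]
      linear_combination (a j * a (m - j)) * ((-1 : ℝ) ^ j * hsign - (-1) ^ (m - j) * hsq)
  rw [Finset.sum_neg_distrib] at h
  linarith

/-- For odd `m`, the alternating bilinear form `∑ (-1) ^ j * a j * b (m - 1 - j)` is symmetric. -/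
lemma sum_alternating_mul_reflect_comm {m : ℕ} (hm : Odd m) (a b : ℕ → ℝ) :
    ∑ j ∈ Finset.range m, (-1 : ℝ) ^ j * (a j * b (m - 1 - j)) =
      ∑ j ∈ Finset.range m, (-1 : ℝ) ^ j * (b j * a (m - 1 - j)) := by
  rw [← Finset.sum_range_reflect]
  refine Finset.sum_congr rfl fun j hj => ?_
  rw [Finset.mem_range] at hj
  have hsign : (-1 : ℝ) ^ (m - 1 - j) = (-1) ^ j := by
    obtain ⟨k, rfl⟩ := hm
    exact neg_one_pow_congr (by grind)
  rw [Nat.sub_sub_self (by omega), hsign, mul_comm (a _)]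

lemma sum_range_eq_add_sum_Icc {m : ℕ} (hm : 0 < m) (f : ℕ → ℝ) :
    ∑ j ∈ Finset.range m, f j = f 0 + ∑ j ∈ Finset.Icc 1 (m - 1), f j := by
  rw [Finset.sum_range_eq_add_Ico _ hm]
  congr 2

/-- Pointwise energy balance: the energy production is half the divergence of the flux
`-σ₀ ∑ (-1) ^ j * a j * a (m - 1 - j)`. Here `a`, `b`, `c` stand for the values, the time derivatives
and the space derivatives of the unknowns. -/
lemma energy_production_eq {m : ℕ} (hm : Odd m) {σ₀ τ : ℝ} {a b c : ℕ → ℝ}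
    (h₀ : b 0 + σ₀ * c (m - 1) = 0)
    (h : ∀ j ∈ Finset.Icc 1 (m - 1),
      τ * b j + σ₀ * (-1 : ℝ) ^ j * c (m - j - 1) = σ₀ * (-1 : ℝ) ^ j * a (m - j)) :
    a 0 * b 0 + τ * ∑ j ∈ Finset.Icc 1 (m - 1), a j * b j =
      -(σ₀ / 2) * ∑ j ∈ Finset.range m,
        (-1 : ℝ) ^ j * (c j * a (m - 1 - j) + a j * c (m - 1 - j)) := by
  have hsum : τ * ∑ j ∈ Finset.Icc 1 (m - 1), a j * b j =
      σ₀ * ∑ j ∈ Finset.Icc 1 (m - 1), (-1 : ℝ) ^ j * (a j * a (m - j)) -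
        σ₀ * ∑ j ∈ Finset.Icc 1 (m - 1), (-1 : ℝ) ^ j * (a j * c (m - 1 - j)) := by
    rw [Finset.mul_sum, Finset.mul_sum, Finset.mul_sum, ← Finset.sum_sub_distrib]
    refine Finset.sum_congr rfl fun j hj => ?_
    have hj' := h j hj
    rw [Nat.sub_right_comm] at hj'
    linear_combination a j * hj'
  have hrange := sum_range_eq_add_sum_Icc hm.pos
    (fun j => (-1 : ℝ) ^ j * (a j * c (m - 1 - j)))
  simp only [pow_zero, one_mul, Nat.sub_zero] at hrange
  simp only [mul_add, Finset.sum_add_distrib]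
  rw [sum_alternating_mul_reflect_comm hm c a, hsum, sum_alternating_mul_reflect_eq_zero hm a]
  linear_combination a 0 * h₀ + σ₀ * hrange

/-- Energy conservation for the Ketcheson–Biswas hyperbolic approximation of the
linear higher-order equation `∂_t u + σ₀ ∂_x^m u = 0` with odd leading order `m`. -/
theorem linear_odd_order_hyperbolic_energy_conservation
    (m : ℕ) (hm : Odd m) (hm3 : 3 ≤ m)
    (σ₀ : ℝ) (hσ : σ₀ = 1 ∨ σ₀ = -1)
    (L T τ : ℝ) (hL : 0 < L) (hT : 0 < T) (hτ : 0 < τ)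
    (q : ℕ → ℝ → ℝ → ℝ)
    (hq : ∀ j < m, ContDiff ℝ 1 (Function.uncurry (q j)))
    (hper : ∀ j < m, ∀ t, Function.Periodic (q j t) L)
    (heq₀ : ∀ t ∈ Set.Icc (0:ℝ) T, ∀ x : ℝ,
      pdt (q 0) t x + σ₀ * pdx (q (m - 1)) t x = 0)
    (heq : ∀ j ∈ Finset.Icc 1 (m - 1), ∀ t ∈ Set.Icc (0:ℝ) T, ∀ x : ℝ,
      τ * pdt (q j) t x + σ₀ * (-1 : ℝ) ^ j * pdx (q (m - j - 1)) t x
        = σ₀ * (-1 : ℝ) ^ j * q (m - j) t x) :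
    ∀ t ∈ Set.Icc (0:ℝ) T,
      (∫ x in (0:ℝ)..L,
        (q 0 t x ^ 2 / 2 + τ / 2 * ∑ j ∈ Finset.Icc 1 (m - 1), q j t x ^ 2))
      = ∫ x in (0:ℝ)..L,
        (q 0 0 x ^ 2 / 2 + τ / 2 * ∑ j ∈ Finset.Icc 1 (m - 1), q j 0 x ^ 2) := by
  intro t ht
  have hcont (s : ℝ) (j : ℕ) (hj : j < m) : Continuous (q j s) :=
    (hq j hj).continuous.comp (by fun_prop : Continuous fun x => (s, x))
  have hlt {j : ℕ} (hj : j ∈ Finset.Icc 1 (m - 1)) : j < m := by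
    rw [Finset.mem_Icc] at hj
    omega
  refine integral_eq_of_integral_deriv_eq_zero
    (e := fun t x => q 0 t x ^ 2 / 2 + τ / 2 * ∑ j ∈ Finset.Icc 1 (m - 1), q j t x ^ 2)
    (e' := fun t x => q 0 t x * pdt (q 0) t x +
      τ * ∑ j ∈ Finset.Icc 1 (m - 1), q j t x * pdt (q j) t x)
    hL.le ht.1 ?_ ?_ ?_ ?_
  · intro s
    exact (((hcont s 0 (by omega)).pow 2).div_const 2).add (continuous_const.mul
      (continuous_finsetSum _ fun j hj => (hcont s j (hlt hj)).pow 2))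
  · intro s x
    have hd (j : ℕ) (hj : j < m) :
        HasDerivAt (fun r => q j r x ^ 2) (2 * (q j s x * pdt (q j) s x)) s := by
      refine ((hasDerivAt_pdt (hq j hj) s x).fun_pow 2).congr_deriv ?_
      push_cast
      ring
    refine (((hd 0 (by omega)).div_const 2).fun_add
      ((HasDerivAt.fun_sum fun j hj => hd j (hlt hj)).const_mul (τ / 2))).congr_deriv ?_
    rw [← Finset.mul_sum]
    ring
  · have hc (j : ℕ) (hj : j < m) :
        Continuous (fun p : ℝ × ℝ => q j p.1 p.2 * pdt (q j) p.1 p.2) :=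
      (hq j hj).continuous.mul (continuous_pdt (hq j hj))
    exact (hc 0 (by omega)).add
      (continuous_const.mul (continuous_finsetSum _ fun j hj => hc j (hlt hj)))
  · intro s hs
    have hsT : s ∈ Set.Icc 0 T := ⟨hs.1, hs.2.trans ht.2⟩
    have hreflect {j : ℕ} : m - 1 - j < m := by omega
    have hprod (x : ℝ) := energy_production_eq hm (a := fun j => q j s x)
      (b := fun j => pdt (q j) s x) (c := fun j => pdx (q j) s x) (heq₀ s hsT x)
      (fun j hj => heq j hj s hsT x)
    simp only [hprod]
    rw [intervalIntegral.integral_const_mul, intervalIntegral.integral_eq_sub_of_hasDerivAt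
      (f := fun x => ∑ j ∈ Finset.range m, (-1 : ℝ) ^ j * (q j s x * q (m - 1 - j) s x))]
    · have hend (j : ℕ) (hj : j < m) : q j s L = q j s 0 := (hper j hj s).eq
      rw [Finset.sum_congr rfl fun j hj => by
        rw [hend j (Finset.mem_range.1 hj), hend (m - 1 - j) hreflect], sub_self, mul_zero]
    · intro x _
      exact HasDerivAt.fun_sum fun j hj =>
        ((hasDerivAt_pdx (hq j (Finset.mem_range.1 hj)) s x).mul
          (hasDerivAt_pdx (hq (m - 1 - j) hreflect) s x)).const_mul _
    · refine (continuous_finsetSum _ fun j hj => continuous_const.mul ?_).intervalIntegrable 0 L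
      have hj' := Finset.mem_range.1 hj
      exact ((continuous_pdx (hq j hj') s).mul (hcont s _ hreflect)).add
        ((hcont s j hj').mul (continuous_pdx (hq _ hreflect) s))
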